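/- Let A₁ and A₂ be complex C*-algebras (complete normed complex star-algebras satisfying the C*-identity ‖a*a‖ = ‖a‖²), with A₁ finite-dimensional over ℂ of complex dimension at least 2. If there exists a bijection φ : A₁ → A₂ such that for all u, v ∈ A₁, u ⊥ v if and only if φ(u) ⊥ φ(v) (Birkhoff–James orthogonality with complex scalars on both sides), then there exists a star-algebra isomorphism A₁ ≅ A₂ over ℂ. -/

import Mathlib

/-- Birkhoff–James orthogonality with complex scalars:
`u ⊥ v` iff `‖u + c • v‖ ≥ ‖u‖` for all `c : ℂ`. -/
def BJOrth {E : Type*} [Norm E] [Add E] [SMul ℂ E] (u v : E) : Prop :=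
  ∀ c : ℂ, ‖u‖ ≤ ‖u + c • v‖

/-!
A finite-dimensional C⋆-algebra is a product of operator algebras `B(H i)`: the trace of left
multiplication is a faithful positive functional, so the algebra is semisimple, and it equips every
simple module with an invariant inner product. Birkhoff–James orthogonality detects finite
dimension, because by compactness finitely many sets `{y | BJOrth x y}` meet only in `0`, and it
remains to recover the number and the sizes of the blocks.

A rank-one operator `x ↦ ⟪ξ, x⟫ • η` in one block is a smooth point of the norm, with support
functional proportional to the matrix coefficient `b ↦ ⟪η, b ξ⟫`. Hence the kernels of matrix
coefficients are exactly the maximal sets of the form `{y | BJOrth a y}` with `a ≠ 0`, and a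
Birkhoff–James isomorphism, although it need not be linear, carries these kernels to each other.
Membership of a functional in a span is a statement about kernels alone, so linear relations between
matrix coefficients are preserved. Coefficients lie in the same block if and only if they are joined
by a chain of three-term relations, and the coefficients of the block `H i` span a space of
dimension `(dim H i) ^ 2`.
-/

section FiniteDimensionalCStarAlgebra

open scoped ComplexOrder

lemma exists_one_of_isApproximateUnit {A : Type*} [TopologicalSpace A] [T2Space A] [Mul A]
    [SeparatelyContinuousMul A] {l : Filter A} (hl : l.IsApproximateUnit) {K : Set A}
    (hK : IsCompact K) (hKl : K ∈ l) : ∃ e : A, ∀ a, e * a = a ∧ a * e = a := by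
  have := hl.neBot
  obtain ⟨U, hU⟩ := Ultrafilter.exists_le l
  obtain ⟨e, -, he⟩ := hK.ultrafilter_le_nhds U (Filter.le_principal_iff.2 (hU hKl))
  have hUe : Filter.Tendsto id (U : Filter A) (nhds e) := he
  exact ⟨e, fun a ↦
    ⟨tendsto_nhds_unique (hUe.mul_const a) ((hl.tendsto_mul_right a).mono_left hU),
      tendsto_nhds_unique (hUe.const_mul a) ((hl.tendsto_mul_left a).mono_left hU)⟩⟩

lemma exists_one_of_finiteDimensional (A : Type*) [NonUnitalCStarAlgebra A]
    [FiniteDimensional ℂ A] : ∃ e : A, ∀ a, e * a = a ∧ a * e = a := by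
  let := CStarAlgebra.spectralOrder A
  have := CStarAlgebra.spectralOrderedRing A
  have := FiniteDimensional.proper ℂ A
  have hl := CStarAlgebra.increasingApproximateUnit A
  refine exists_one_of_isApproximateUnit hl.toIsApproximateUnit
    (isCompact_closedBall (0 : A) 1) ?_
  filter_upwards [hl.eventually_norm] with x hx using mem_closedBall_zero_iff.2 hx

lemma spectrum_lmul {R A : Type*} [CommRing R] [Ring A] [Algebra R A] (a : A) :
    spectrum R (Algebra.lmul R A a) = spectrum R a := by
  ext z
  rw [spectrum.mem_iff, spectrum.mem_iff, ← (Algebra.lmul R A).commutes, ← map_sub,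
    Algebra.lmul_isUnit_iff]

lemma mem_roots_charpoly_lmul_iff {K A : Type*} [Field K] [Ring A] [Algebra K A]
    [FiniteDimensional K A] {a : A} {z : K} :
    z ∈ (Algebra.lmul K A a).charpoly.roots ↔ z ∈ spectrum K a := by
  rw [Polynomial.mem_roots (LinearMap.charpoly_monic _).ne_zero,
    ← Module.End.mem_spectrum_iff_isRoot_charpoly, spectrum_lmul]

/-- The trace of left multiplication by an element of a not necessarily commutative algebra
(`Algebra.trace` is only available for commutative ones). -/
noncomputable def regularTrace (K A : Type*) [Field K] [Ring A] [Algebra K A] : A →ₗ[K] K :=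
  LinearMap.trace K A ∘ₗ (Algebra.lmul K A).toLinearMap

lemma regularTrace_eq_sum_roots_charpoly_lmul {K A : Type*} [Field K] [IsAlgClosed K] [Ring A]
    [Algebra K A] [FiniteDimensional K A] (a : A) :
    regularTrace K A a = (Algebra.lmul K A a).charpoly.roots.sum :=
  Module.End.trace_eq_sum_roots_charpoly_of_splits (IsAlgClosed.splits _)

lemma regularTrace_eq_zero_of_isNilpotent {K A : Type*} [Field K] [Ring A] [Algebra K A]
    {a : A} (ha : IsNilpotent a) : regularTrace K A a = 0 :=
  (LinearMap.isNilpotent_trace_of_isNilpotent (ha.map (Algebra.lmul K A))).eq_zero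

section Ordered

variable {A : Type*} [CStarAlgebra A] [PartialOrder A] [StarOrderedRing A]
  [FiniteDimensional ℂ A]

lemma roots_charpoly_lmul_nonneg {a : A} (ha : 0 ≤ a) :
    ∀ z ∈ (Algebra.lmul ℂ A a).charpoly.roots, 0 ≤ z :=
  fun _ hz ↦ spectrum_nonneg_of_nonneg ha (mem_roots_charpoly_lmul_iff.1 hz)

lemma regularTrace_nonneg {a : A} (ha : 0 ≤ a) : 0 ≤ regularTrace ℂ A a := by
  rw [regularTrace_eq_sum_roots_charpoly_lmul]
  exact Multiset.sum_nonneg (roots_charpoly_lmul_nonneg ha)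

lemma eq_zero_of_regularTrace_eq_zero {a : A} (ha : 0 ≤ a) (htr : regularTrace ℂ A a = 0) :
    a = 0 := by
  rw [regularTrace_eq_sum_roots_charpoly_lmul] at htr
  exact CFC.eq_zero_of_spectrum_subset_zero (R := ℂ) a (fun z hz ↦
    Multiset.all_zero_of_le_zero_le_of_sum_eq_zero (roots_charpoly_lmul_nonneg ha) htr z
      (mem_roots_charpoly_lmul_iff.2 hz)) (IsSelfAdjoint.of_nonneg ha).isStarNormal

end Ordered

section Unital

variable {A : Type*} [CStarAlgebra A] [FiniteDimensional ℂ A]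

lemma regularTrace_star_mul_self_nonneg (a : A) : 0 ≤ regularTrace ℂ A (star a * a) := by
  let := CStarAlgebra.spectralOrder A
  have := CStarAlgebra.spectralOrderedRing A
  exact regularTrace_nonneg (star_mul_self_nonneg a)

lemma eq_zero_of_regularTrace_star_mul_self_eq_zero {a : A}
    (ha : regularTrace ℂ A (star a * a) = 0) : a = 0 := by
  let := CStarAlgebra.spectralOrder A
  have := CStarAlgebra.spectralOrderedRing A
  exact CStarRing.star_mul_self_eq_zero_iff a |>.1
    (eq_zero_of_regularTrace_eq_zero (star_mul_self_nonneg a) ha)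

lemma regularTrace_star (a : A) : regularTrace ℂ A (star a) = star (regularTrace ℂ A a) := by
  let := CStarAlgebra.spectralOrder A
  have := CStarAlgebra.spectralOrderedRing A
  exact map_star (PositiveLinearMap.mk₀ (regularTrace ℂ A) fun _ ↦ regularTrace_nonneg) a

lemma isSemisimpleRing_of_finiteDimensional (A : Type*) [CStarAlgebra A]
    [FiniteDimensional ℂ A] : IsSemisimpleRing A := by
  have := IsArtinianRing.of_finite ℂ A
  rw [IsArtinianRing.isSemisimpleRing_iff_jacobson, eq_bot_iff]
  intro a ha
  obtain ⟨n, hn⟩ := IsSemiprimaryRing.isNilpotent (R := A)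
  have hmem : (star a * a) ^ n ∈ Ring.jacobson A ^ n :=
    Ideal.pow_mem_pow (Ideal.mul_mem_left _ _ ha) n
  have hnil : IsNilpotent (star a * a) := ⟨n, by simpa [hn] using hmem⟩
  exact eq_zero_of_regularTrace_star_mul_self_eq_zero (regularTrace_eq_zero_of_isNilpotent hnil)

lemma exists_linearEquiv_inner_eq {𝕜 V : Type*} [RCLike 𝕜] [AddCommGroup V] [Module 𝕜 V]
    [FiniteDimensional 𝕜 V] {n : ℕ} (hn : Module.finrank 𝕜 V = n)
    (c : InnerProductSpace.Core 𝕜 V) :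
    ∃ e : V ≃ₗ[𝕜] EuclideanSpace 𝕜 (Fin n), ∀ v w, inner 𝕜 (e v) (e w) = c.inner v w := by
  let : NormedAddCommGroup V := @InnerProductSpace.Core.toNormedAddCommGroup 𝕜 V _ _ _ c
  let : InnerProductSpace 𝕜 V := InnerProductSpace.ofCore c.toCore
  let b := (stdOrthonormalBasis 𝕜 V).reindex (finCongr hn)
  exact ⟨b.repr.toLinearEquiv, b.repr.inner_map_map⟩

/-- The inner product `⟨v, w⟩ = tr ((j v)⋆ (j w))` pulled back along a linear embedding `j` of `V`
into a finite-dimensional C⋆-algebra. If `j` intertwines a representation on `V` with left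
multiplication, this inner product makes it a ⋆-representation. -/
noncomputable abbrev traceInnerCore {V : Type*} [AddCommGroup V] [Module ℂ V] (j : V →ₗ[ℂ] A)
    (hj : Function.Injective j) : InnerProductSpace.Core ℂ V where
  inner v w := regularTrace ℂ A (star (j v) * j w)
  conj_inner_symm v w := by
    rw [starRingEnd_apply, ← regularTrace_star, star_mul, star_star]
  re_inner_nonneg v := (Complex.le_def.1 (regularTrace_star_mul_self_nonneg (j v))).1
  add_left u v w := by simp [add_mul]
  smul_left v w c := by simp
  definite v hv := hj <| by rw [eq_zero_of_regularTrace_star_mul_self_eq_zero hv, map_zero]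

lemma exists_linearEquiv_inner_star {V : Type*} [AddCommGroup V] [Module ℂ V]
    [FiniteDimensional ℂ V] {n : ℕ} (hn : Module.finrank ℂ V = n)
    (ρ : A → V →ₗ[ℂ] V) (j : V →ₗ[ℂ] A) (hj : Function.Injective j)
    (hjρ : ∀ a v, j (ρ a v) = a * j v) :
    ∃ e : V ≃ₗ[ℂ] EuclideanSpace ℂ (Fin n),
      ∀ a v w, inner ℂ (e (ρ (star a) v)) (e w) = inner ℂ (e v) (e (ρ a w)) := by
  obtain ⟨e, he : ∀ v w, inner ℂ (e v) (e w) = regularTrace ℂ A (star (j v) * j w)⟩ :=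
    exists_linearEquiv_inner_eq hn (traceInnerCore j hj)
  exact ⟨e, fun a v w ↦ by simp [he, hjρ, mul_assoc]⟩

/-- The algebra isomorphism from matrices to operators on `ℂⁿ` determined by a linear change of
coordinates `e`, which need not be unitary. -/
noncomputable abbrev matrixEquivOperators {n : ℕ}
    (e : (Fin n → ℂ) ≃ₗ[ℂ] EuclideanSpace ℂ (Fin n)) :
    Matrix (Fin n) (Fin n) ℂ ≃ₐ[ℂ] EuclideanSpace ℂ (Fin n) →L[ℂ] EuclideanSpace ℂ (Fin n) :=
  Matrix.toLinAlgEquiv'.trans ((e.conjAlgEquiv ℂ).trans (Module.End.toContinuousLinearMap _))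

lemma matrixEquivOperators_apply_apply {n : ℕ}
    (e : (Fin n → ℂ) ≃ₗ[ℂ] EuclideanSpace ℂ (Fin n)) (M : Matrix (Fin n) (Fin n) ℂ)
    (v : Fin n → ℂ) : matrixEquivOperators e M (e v) = e (M.mulVec v) := by
  simp [matrixEquivOperators, Module.End.toContinuousLinearMap, LinearEquiv.conjAlgEquiv_apply]

/-- The embedding of column vectors as the matrices supported on the first column, which is a left
ideal of the matrix algebra. -/
noncomputable def firstColumn (K : Type*) [CommSemiring K] (n : ℕ) [NeZero n] :
    (Fin n → K) →ₗ[K] Matrix (Fin n) (Fin n) K where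
  toFun v := Matrix.vecMulVec v (Pi.single 0 1)
  map_add' _ _ := Matrix.add_vecMulVec ..
  map_smul' _ _ := Matrix.smul_vecMulVec ..

lemma firstColumn_injective (K : Type*) [CommSemiring K] (n : ℕ) [NeZero n] :
    Function.Injective (firstColumn K n) := fun v w hvw ↦ funext fun k ↦ by
  simpa [firstColumn, Matrix.vecMulVec_apply] using congrFun (congrFun hvw k) 0

lemma firstColumn_mulVec {K : Type*} [CommSemiring K] {n : ℕ} [NeZero n]
    (M : Matrix (Fin n) (Fin n) K) (v : Fin n → K) :
    firstColumn K n (M.mulVec v) = M * firstColumn K n v :=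
  (Matrix.mul_vecMulVec ..).symm

lemma exists_matrixEquivOperators_star {ι : Type*} {d : ι → ℕ}
    (Φ : A ≃ₐ[ℂ] ∀ i, Matrix (Fin (d i)) (Fin (d i)) ℂ) (i : ι) [NeZero (d i)] :
    ∃ e, ∀ a, matrixEquivOperators e (Φ (star a) i) = star (matrixEquivOperators e (Φ a i)) := by
  classical
  let j : (Fin (d i) → ℂ) →ₗ[ℂ] A :=
    Φ.symm.toLinearMap ∘ₗ LinearMap.single ℂ _ i ∘ₗ firstColumn ℂ (d i)
  have hj : Function.Injective j :=
    Φ.symm.injective.comp ((Pi.single_injective i).comp (firstColumn_injective ℂ (d i)))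
  have hjΦ (a : A) (v : Fin (d i) → ℂ) : j ((Φ a i).mulVecLin v) = a * j v := by
    apply Φ.injective
    simp [j, firstColumn_mulVec, Pi.single_mul_right]
  obtain ⟨e, he⟩ := exists_linearEquiv_inner_star (n := d i) (by simp)
    (fun a ↦ (Φ a i).mulVecLin) j hj hjΦ
  refine ⟨e, fun a ↦ ?_⟩
  rw [ContinuousLinearMap.star_eq_adjoint, ContinuousLinearMap.eq_adjoint_iff,
    e.surjective.forall₂]
  intro v w
  simpa only [matrixEquivOperators_apply_apply, Matrix.mulVecLin_apply] using he a v w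

theorem exists_starAlgEquiv_pi_operators_of_unital (A : Type*) [CStarAlgebra A]
    [FiniteDimensional ℂ A] :
    ∃ (k : ℕ) (d : Fin k → ℕ), (∀ i, NeZero (d i)) ∧ Nonempty (A ≃⋆ₐ[ℂ]
      ∀ i, EuclideanSpace ℂ (Fin (d i)) →L[ℂ] EuclideanSpace ℂ (Fin (d i))) := by
  have := isSemisimpleRing_of_finiteDimensional A
  obtain ⟨k, d, hd, ⟨Φ⟩⟩ := IsSemisimpleRing.exists_algEquiv_pi_matrix_of_isAlgClosed ℂ A
  choose e he using exists_matrixEquivOperators_star Φ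
  exact ⟨k, d, hd, ⟨.ofAlgEquiv (Φ.trans (.piCongrRight fun i ↦ matrixEquivOperators (e i)))
    fun a ↦ funext fun i ↦ he i a⟩⟩

end Unital

theorem exists_starAlgEquiv_pi_operators (A : Type*) [inst : NonUnitalCStarAlgebra A]
    [FiniteDimensional ℂ A] :
    ∃ (k : ℕ) (d : Fin k → ℕ), (∀ i, NeZero (d i)) ∧ Nonempty (A ≃⋆ₐ[ℂ]
      ∀ i, EuclideanSpace ℂ (Fin (d i)) →L[ℂ] EuclideanSpace ℂ (Fin (d i))) := by
  obtain ⟨e, he⟩ := exists_one_of_finiteDimensional A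
  let ring : Ring A :=
    { (inferInstance : NonUnitalRing A) with
      one := e
      one_mul := fun a ↦ (he a).1
      mul_one := fun a ↦ (he a).2 }
  let algebra : Algebra ℂ A := Algebra.ofModule smul_mul_assoc mul_smul_comm
  let normedRing : NormedRing A := { inst, ring with }
  let : CStarAlgebra A := { inst, normedRing, algebra with }
  exact exists_starAlgEquiv_pi_operators_of_unital A

end FiniteDimensionalCStarAlgebra

namespace BJOrth

section Basic

variable {E : Type*} [NormedAddCommGroup E] [NormedSpace ℂ E] {u v : E}

@[simp]
lemma self_iff : BJOrth u u ↔ u = 0 := by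
  refine ⟨fun h ↦ ?_, fun h c ↦ by simp [h]⟩
  simpa using h (-1)

lemma smul_right (h : BJOrth u v) (z : ℂ) : BJOrth u (z • v) := fun c ↦ by
  simpa only [smul_smul] using h (c * z)

lemma norm_smul_le (h : BJOrth u v) (z c : ℂ) : ‖z‖ * ‖u‖ ≤ ‖z • u + c • v‖ := by
  rcases eq_or_ne z 0 with rfl | hz
  · simp
  calc ‖z‖ * ‖u‖ ≤ ‖z‖ * ‖u + (z⁻¹ * c) • v‖ := by gcongr; exact h _
    _ = ‖z • u + c • v‖ := by rw [← norm_smul, smul_add, smul_smul, mul_inv_cancel_left₀ hz]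

lemma of_apply_eq_zero {f : Module.Dual ℂ E} {C : ℝ} (hC : 0 < C) (hf : ∀ x, ‖f x‖ ≤ C * ‖x‖)
    (hu : C * ‖u‖ ≤ ‖f u‖) (hv : f v = 0) : BJOrth u v := fun c ↦ by
  refine le_of_mul_le_mul_left (hu.trans ?_) hC
  simpa [hv] using hf (u + c • v)

-- If `f v ≠ 0`, some `w = u - (f u / f v) • v` in `ker f` has
-- `‖u + s • w‖ ≥ (1 + s) * ‖u‖`, of first order in `s`, against the assumed quadratic bound.
lemma apply_eq_zero_of_norm_add_sq_le (h : BJOrth u v) {f : Module.Dual ℂ E} {K : ℝ}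
    (hfu : f u ≠ 0) (hf : ∀ w, f w = 0 → ‖u + w‖ ^ 2 ≤ ‖u‖ ^ 2 + K * ‖w‖ ^ 2) : f v = 0 := by
  by_contra hfv
  set w := u - (f u / f v) • v with hw
  have hfw : f w = 0 := by simp [hw, hfv]
  have hu : 0 < ‖u‖ ^ 2 := by
    have : u ≠ 0 := fun h0 ↦ hfu (by rw [h0, map_zero])
    positivity
  have hgrowth (s : ℝ) : (1 + s) ^ 2 * ‖u‖ ^ 2 ≤ ‖u‖ ^ 2 + K * s ^ 2 * ‖w‖ ^ 2 :=
    calc (1 + s) ^ 2 * ‖u‖ ^ 2 = (‖((1 + s : ℝ) : ℂ)‖ * ‖u‖) ^ 2 := by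
          rw [mul_pow, Complex.norm_real, Real.norm_eq_abs, sq_abs]
      _ ≤ ‖((1 + s : ℝ) : ℂ) • u + (-(s * (f u / f v))) • v‖ ^ 2 := by
          gcongr; exact h.norm_smul_le _ _
      _ = ‖u + (s : ℂ) • w‖ ^ 2 := by rw [hw]; push_cast; congr 2; module
      _ ≤ ‖u‖ ^ 2 + K * ‖(s : ℂ) • w‖ ^ 2 := hf _ (by simp [hfw])
      _ = ‖u‖ ^ 2 + K * s ^ 2 * ‖w‖ ^ 2 := by
          rw [norm_smul, mul_pow, Complex.norm_real, Real.norm_eq_abs, sq_abs, mul_assoc]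
  have hD : 0 < |K| * ‖w‖ ^ 2 + 1 := by positivity
  set s := ‖u‖ ^ 2 / (|K| * ‖w‖ ^ 2 + 1)
  have hs0 : 0 < s := by positivity
  have hsD : s * (|K| * ‖w‖ ^ 2 + 1) = ‖u‖ ^ 2 := div_mul_cancel₀ _ hD.ne'
  have hupper : K * s ^ 2 * ‖w‖ ^ 2 ≤ s * ‖u‖ ^ 2 :=
    calc K * s ^ 2 * ‖w‖ ^ 2 ≤ |K| * s ^ 2 * ‖w‖ ^ 2 := by gcongr; exact le_abs_self K
      _ ≤ s * (s * (|K| * ‖w‖ ^ 2 + 1)) := by nlinarith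
      _ = s * ‖u‖ ^ 2 := by rw [hsD]
  nlinarith [hgrowth s, mul_pos hs0 hu, mul_pos (pow_pos hs0 2) hu]

lemma isClosed_ofPred (u : E) : IsClosed {v : E | BJOrth u v} := by
  simp only [BJOrth, Set.ofPred_forall]
  exact isClosed_iInter fun c ↦ isClosed_le continuous_const (by fun_prop)

end Basic

section Finiteness

variable {E : Type*} [NormedAddCommGroup E] [NormedSpace ℂ E]

lemma exists_finset_separating (E : Type*) [NormedAddCommGroup E] [NormedSpace ℂ E]
    [FiniteDimensional ℂ E] : ∃ t : Finset E, ∀ y, (∀ x ∈ t, BJOrth x y) → y = 0 := by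
  have := FiniteDimensional.proper ℂ E
  obtain ⟨t, ht⟩ := (isCompact_sphere (0 : E) 1).elim_finite_subcover
    (fun x ↦ {y | BJOrth x y}ᶜ) (fun x ↦ (isClosed_ofPred x).isOpen_compl) fun y hy ↦
      Set.mem_iUnion.2 ⟨y, fun h ↦ ne_zero_of_mem_unit_sphere ⟨y, hy⟩ (self_iff.1 h)⟩
  refine ⟨t, fun y hy ↦ by_contra fun hne ↦ ?_⟩
  have hmem : (‖y‖ : ℂ)⁻¹ • y ∈ Metric.sphere (0 : E) 1 := by
    simp [norm_smul, hne]
  obtain ⟨x, hx, hxy⟩ := Set.mem_iUnion₂.1 (ht hmem)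
  exact hxy ((hy x hx).smul_right _)

lemma finiteDimensional_of_finset_separating (t : Finset E)
    (ht : ∀ y, (∀ x ∈ t, BJOrth x y) → y = 0) : FiniteDimensional ℂ E := by
  choose g hg hgx using fun x : E ↦ exists_dual_vector'' ℂ x
  let evalAll : E →ₗ[ℂ] (t → ℂ) := LinearMap.pi fun x ↦ (g x).toLinearMap
  refine FiniteDimensional.of_injective evalAll ((injective_iff_map_eq_zero _).2 fun y hy ↦ ?_)
  exact ht y fun x hx ↦ of_apply_eq_zero (f := (g x).toLinearMap) one_pos
    ((g x).le_of_opNorm_le (hg x)) (by simp [hgx]) (congrFun hy ⟨x, hx⟩)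

end Finiteness

end BJOrth

/-- A Birkhoff–James isomorphism: a bijection, not assumed linear or continuous, that preserves
Birkhoff–James orthogonality in both directions. -/
abbrev BJIso (E F : Type*) [Norm E] [Add E] [SMul ℂ E] [Norm F] [Add F] [SMul ℂ F] :=
  (BJOrth : E → E → Prop) ≃r (BJOrth : F → F → Prop)

namespace BJIso

variable {E F : Type*} [NormedAddCommGroup E] [NormedSpace ℂ E] [NormedAddCommGroup F]
  [NormedSpace ℂ F]

lemma map_eq_zero_iff (ψ : BJIso E F) {x : E} : ψ x = 0 ↔ x = 0 := by
  rw [← BJOrth.self_iff, ψ.map_rel_iff, BJOrth.self_iff]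

theorem finiteDimensional [FiniteDimensional ℂ E] (ψ : BJIso E F) : FiniteDimensional ℂ F := by
  classical
  obtain ⟨t, ht⟩ := BJOrth.exists_finset_separating E
  refine BJOrth.finiteDimensional_of_finset_separating (t.image ψ) (ψ.surjective.forall.2 ?_)
  intro y hy
  simp only [Finset.forall_mem_image, ψ.map_rel_iff] at hy
  exact ψ.map_eq_zero_iff.2 (ht y hy)

/-- A ⋆-isomorphism of C⋆-algebras is isometric, hence a Birkhoff–James isomorphism. -/
def ofStarAlgEquiv {A B : Type*} [NonUnitalCStarAlgebra A] [NonUnitalCStarAlgebra B]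
    (Φ : A ≃⋆ₐ[ℂ] B) : BJIso A B where
  toEquiv := Φ.toEquiv
  map_rel_iff' {u v} := by
    have hnorm : ∀ a, ‖Φ a‖ = ‖a‖ := NonUnitalStarAlgHom.norm_map Φ Φ.injective
    change BJOrth (Φ u) (Φ v) ↔ BJOrth u v
    simp only [BJOrth, ← map_smul, ← map_add, hnorm]

end BJIso

section Functionals

open Module Submodule

variable {α K V W : Type*} [Field K] [AddCommGroup V] [Module K V] [AddCommGroup W] [Module K W]

lemma dual_apply_eq_zero_of_imp {f g : Dual K V} (hg : g ≠ 0) (h : ∀ y, f y = 0 → g y = 0)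
    {y : V} (hy : g y = 0) : f y = 0 := by
  obtain ⟨z, hz : g z ≠ 0⟩ := DFunLike.ne_iff.1 hg
  have hfz : f z ≠ 0 := fun h0 ↦ hz (h z h0)
  have hgf : g (y - (f y / f z) • z) = 0 := h _ (by simp [hfz])
  simpa [hy, hfz, hz] using hgf

lemma dual_apply_eq_zero_of_mem_span_image {v : α → Dual K V} {s : Set α} {f : Dual K V}
    (hf : f ∈ span K (v '' s)) {y : V} (hy : ∀ a ∈ s, v a y = 0) : f y = 0 := by
  have hle : span K (v '' s) ≤ LinearMap.ker (Dual.eval K V y) :=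
    span_le.2 (Set.image_subset_iff.2 hy)
  exact hle hf

lemma mem_span_dual_image_iff [FiniteDimensional K V] {v : α → Dual K V} {s : Set α}
    {f : Dual K V} : f ∈ span K (v '' s) ↔ ∀ y, (∀ a ∈ s, v a y = 0) → f y = 0 := by
  rw [← Subspace.dualCoannihilator_dualAnnihilator_eq (W := span K (v '' s)),
    mem_dualAnnihilator]
  simp only [← SetLike.mem_coe, coe_dualCoannihilator_span, Set.mem_ofPred_eq,
    Set.forall_mem_image]

lemma mem_span_dual_image_congr [FiniteDimensional K V] [FiniteDimensional K W] {ψ : V → W}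
    (hψ : Function.Surjective ψ) {v : α → Dual K V} {w : α → Dual K W}
    (h : ∀ a y, v a y = 0 ↔ w a (ψ y) = 0) (a : α) (s : Set α) :
    v a ∈ span K (v '' s) ↔ w a ∈ span K (w '' s) := by
  simp only [mem_span_dual_image_iff, hψ.forall, h]

lemma finrank_span_range_le [FiniteDimensional K W] {v : α → V} {w : α → W}
    (h : ∀ a s, w a ∈ span K (w '' s) → v a ∈ span K (v '' s)) :
    finrank K (span K (Set.range v)) ≤ finrank K (span K (Set.range w)) := by
  obtain ⟨κ, a, -, hspan, hv⟩ := exists_linearIndependent' K v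
  have hw : LinearIndependent K (w ∘ a) := by
    rw [linearIndependent_iff_notMem_span] at hv ⊢
    intro k hk
    rw [Set.image_comp] at hk
    exact hv k (Set.image_comp v a _ ▸ h (a k) _ hk)
  have := hw.finite
  have := Fintype.ofFinite κ
  calc finrank K (span K (Set.range v)) = finrank K (span K (Set.range (w ∘ a))) := by
        rw [← hspan, finrank_span_eq_card hv, finrank_span_eq_card hw]
    _ ≤ finrank K (span K (Set.range w)) :=
        finrank_mono (span_mono (Set.range_comp_subset_range a w))

end Functionals

section Operators

open InnerProductSpace

variable {𝕜 E F : Type*} [RCLike 𝕜]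

lemma opNorm_sq_le_of_norm_apply_sq_le [SeminormedAddCommGroup E] [NormedSpace 𝕜 E]
    [SeminormedAddCommGroup F] [NormedSpace 𝕜 F] {f : E →L[𝕜] F} {C : ℝ} (hC : 0 ≤ C)
    (h : ∀ x, ‖f x‖ ^ 2 ≤ C * ‖x‖ ^ 2) : ‖f‖ ^ 2 ≤ C := by
  rw [← Real.le_sqrt (norm_nonneg f) hC]
  refine f.opNorm_le_bound (Real.sqrt_nonneg C) fun x ↦ ?_
  rw [← Real.sqrt_sq (norm_nonneg x), ← Real.sqrt_mul hC]
  exact Real.le_sqrt_of_sq_le (h x)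

lemma exists_norm_eq_one_norm_apply_eq_opNorm [NormedAddCommGroup E] [NormedSpace 𝕜 E]
    [FiniteDimensional 𝕜 E] [Nontrivial E] [SeminormedAddCommGroup F] [NormedSpace 𝕜 F]
    (f : E →L[𝕜] F) : ∃ x, ‖x‖ = 1 ∧ ‖f x‖ = ‖f‖ := by
  have := FiniteDimensional.proper_rclike 𝕜 E
  let : NormedSpace ℝ E := .restrictScalars ℝ 𝕜 E
  obtain ⟨x, hx, hmax⟩ := (isCompact_sphere (0 : E) 1).exists_isMaxOn
    (NormedSpace.sphere_nonempty.2 zero_le_one) (f := fun x ↦ ‖f x‖) (by fun_prop)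
  rw [mem_sphere_zero_iff_norm] at hx
  refine ⟨x, hx, (f.unit_le_opNorm x hx.le).antisymm ?_⟩
  exact f.opNorm_le_of_unit_norm (norm_nonneg _) fun y hy ↦ hmax (mem_sphere_zero_iff_norm.2 hy)

variable [NormedAddCommGroup E] [InnerProductSpace 𝕜 E] [NormedAddCommGroup F]
  [InnerProductSpace 𝕜 F]

-- Split `x = t • ξ + x'` with `x' ⊥ ξ`. Only `t • ξ` survives `rankOne 𝕜 η ξ`, and its image is
-- orthogonal to `c (t • ξ)`, so the cross term is second order: it involves `c x'` alone.
lemma norm_rankOne_add_sq_le {η : E} {ξ : F} {c : F →L[𝕜] E} (hc : inner 𝕜 η (c ξ) = 0) :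
    ‖rankOne 𝕜 η ξ + c‖ ^ 2 ≤ ‖rankOne 𝕜 η ξ‖ ^ 2 + 2 * ‖c‖ ^ 2 := by
  set R := rankOne 𝕜 η ξ with hR
  refine opNorm_sq_le_of_norm_apply_sq_le (by positivity) fun x ↦ ?_
  obtain ⟨p, hp, x', hx', rfl⟩ := (𝕜 ∙ ξ).exists_add_mem_mem_orthogonal x
  obtain ⟨t, rfl⟩ := Submodule.mem_span_singleton.1 hp
  rw [Submodule.mem_orthogonal_singleton_iff_inner_right] at hx'
  set p := t • ξ with hpt
  have hRx : R (p + x') = R p := by simp [hR, inner_add_right, hx']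
  have hcross : inner 𝕜 (R p) (c (p + x')) = inner 𝕜 (R p) (c x') := by
    simp [hR, hpt, inner_add_right, inner_smul_left, inner_smul_right, hc]
  have hpyth : ‖p + x'‖ ^ 2 = ‖p‖ ^ 2 + ‖x'‖ ^ 2 := by
    simp only [sq]
    exact norm_add_sq_eq_norm_sq_add_norm_sq_of_inner_eq_zero (𝕜 := 𝕜) p x'
      (by simp [hpt, inner_smul_left, hx'])
  have hre : RCLike.re (inner 𝕜 (R p) (c x')) ≤ (‖R‖ * ‖p‖) * (‖c‖ * ‖x'‖) :=
    (re_inner_le_norm _ _).trans (by gcongr <;> exact ContinuousLinearMap.le_opNorm _ _)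
  calc ‖(R + c) (p + x')‖ ^ 2
      = ‖R p‖ ^ 2 + 2 * RCLike.re (inner 𝕜 (R p) (c x')) + ‖c (p + x')‖ ^ 2 := by
        rw [add_apply, norm_add_sq (𝕜 := 𝕜), hRx, hcross]
    _ ≤ (‖R‖ * ‖p‖) ^ 2 + 2 * ((‖R‖ * ‖p‖) * (‖c‖ * ‖x'‖)) + (‖c‖ * ‖p + x'‖) ^ 2 := by
        gcongr <;> exact ContinuousLinearMap.le_opNorm _ _
    _ ≤ (‖R‖ ^ 2 + 2 * ‖c‖ ^ 2) * ‖p + x'‖ ^ 2 := by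
        rw [mul_pow ‖c‖, hpyth]
        nlinarith [sq_nonneg (‖R‖ * ‖x'‖ - ‖c‖ * ‖p‖), sq_nonneg (‖c‖ * ‖x'‖)]

end Operators

/-- A matrix coefficient `b ↦ ⟪target, b block source⟫` of the block-diagonal operators
`Π i, H i →L[ℂ] H i`. The two vectors are only required to be nonzero, not normalised. -/
structure MatrixCoeff {ι : Type*} (H : ι → Type*) [∀ i, NormedAddCommGroup (H i)] where
  block : ι
  source : H block
  target : H block
  source_ne_zero : source ≠ 0
  target_ne_zero : target ≠ 0

namespace MatrixCoeff

open Module Submodule InnerProductSpace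

variable {ι κ : Type*} {H : ι → Type*} {K : κ → Type*} [∀ i, NormedAddCommGroup (H i)]
  [∀ j, NormedAddCommGroup (K j)]

lemma block_surjective [∀ i, Nontrivial (H i)] :
    Function.Surjective (block : MatrixCoeff H → ι) := fun i ↦ by
  obtain ⟨x, hx⟩ := exists_ne (0 : H i)
  exact ⟨⟨i, x, x, hx, hx⟩, rfl⟩

lemma norm_target_mul_norm_source_pos (p : MatrixCoeff H) : 0 < ‖p.target‖ * ‖p.source‖ :=
  mul_pos (norm_pos_iff.2 p.target_ne_zero) (norm_pos_iff.2 p.source_ne_zero)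

variable [∀ i, InnerProductSpace ℂ (H i)] [∀ j, InnerProductSpace ℂ (K j)]

/-- The linear functional `b ↦ ⟪target, b block source⟫`. -/
noncomputable def functional (p : MatrixCoeff H) : Dual ℂ (∀ i, H i →L[ℂ] H i) where
  toFun b := inner ℂ p.target (b p.block p.source)
  map_add' _ _ := by simp
  map_smul' _ _ := by simp

lemma functional_apply (p : MatrixCoeff H) (b : ∀ i, H i →L[ℂ] H i) :
    p.functional b = inner ℂ p.target (b p.block p.source) := rfl

section Operator

variable [DecidableEq ι]

/-- The rank-one operator `x ↦ ⟪source, x⟫ • target` in a single block. It is a smooth point of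
the operator norm whose support functional is proportional to `functional`. -/
noncomputable def operator (p : MatrixCoeff H) : ∀ i, H i →L[ℂ] H i :=
  Pi.single p.block (rankOne ℂ p.target p.source)

lemma functional_operator_self (p : MatrixCoeff H) :
    p.functional p.operator = ((‖p.target‖ * ‖p.source‖) ^ 2 : ℝ) := by
  simp [functional_apply, operator, inner_self_eq_norm_sq_to_K, mul_pow, mul_comm]

lemma functional_operator_self_ne_zero (p : MatrixCoeff H) : p.functional p.operator ≠ 0 := by
  rw [functional_operator_self, Complex.ofReal_ne_zero]
  exact pow_ne_zero 2 p.norm_target_mul_norm_source_pos.ne'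

lemma functional_operator_of_ne {p q : MatrixCoeff H} (h : p.block ≠ q.block) :
    p.functional q.operator = 0 := by
  simp [functional_apply, operator, Pi.single_eq_of_ne h]

lemma operator_ne_zero (p : MatrixCoeff H) : p.operator ≠ 0 := fun h ↦
  p.functional_operator_self_ne_zero (by rw [h, map_zero])

end Operator

lemma functional_ne_zero (p : MatrixCoeff H) : p.functional ≠ 0 := fun h ↦ by
  classical exact p.functional_operator_self_ne_zero (by rw [h, LinearMap.zero_apply])

section Orthogonality

variable [Fintype ι]

lemma norm_functional_apply_le (p : MatrixCoeff H) (b : ∀ i, H i →L[ℂ] H i) :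
    ‖p.functional b‖ ≤ ‖p.target‖ * ‖p.source‖ * ‖b‖ :=
  calc ‖p.functional b‖ ≤ ‖p.target‖ * ‖b p.block p.source‖ := norm_inner_le_norm _ _
    _ ≤ ‖p.target‖ * (‖b‖ * ‖p.source‖) := by
        gcongr; exact (b p.block).le_of_opNorm_le (norm_le_pi_norm b _) _
    _ = ‖p.target‖ * ‖p.source‖ * ‖b‖ := by ring

lemma bjOrth_of_functional_eq_zero {p : MatrixCoeff H} {a b : ∀ i, H i →L[ℂ] H i}
    (ha : ‖p.target‖ * ‖p.source‖ * ‖a‖ ≤ ‖p.functional a‖) (hb : p.functional b = 0) :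
    BJOrth a b :=
  .of_apply_eq_zero p.norm_target_mul_norm_source_pos p.norm_functional_apply_le ha hb

lemma norm_operator [DecidableEq ι] (p : MatrixCoeff H) :
    ‖p.operator‖ = ‖p.target‖ * ‖p.source‖ := by
  rw [operator, Pi.norm_single, norm_rankOne]

lemma norm_operator_add_sq_le [DecidableEq ι] {p : MatrixCoeff H} {b : ∀ i, H i →L[ℂ] H i}
    (hb : p.functional b = 0) : ‖p.operator + b‖ ^ 2 ≤ ‖p.operator‖ ^ 2 + 2 * ‖b‖ ^ 2 := by
  rw [← Real.le_sqrt (norm_nonneg _) (by positivity),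
    pi_norm_le_iff_of_nonneg (Real.sqrt_nonneg _)]
  intro i
  apply Real.le_sqrt_of_sq_le
  rcases eq_or_ne i p.block with rfl | hi
  · rw [norm_operator, ← norm_rankOne (𝕜 := ℂ), Pi.add_apply, operator, Pi.single_eq_same]
    refine (norm_rankOne_add_sq_le hb).trans ?_
    gcongr
    exact norm_le_pi_norm b _
  · have hbi : ‖b i‖ ^ 2 ≤ ‖b‖ ^ 2 := by gcongr; exact norm_le_pi_norm b i
    have hi0 : p.operator i = 0 := Pi.single_eq_of_ne hi _
    rw [Pi.add_apply, hi0, zero_add]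
    linarith [sq_nonneg ‖p.operator‖, sq_nonneg ‖b‖]

lemma bjOrth_operator_iff [DecidableEq ι] {p : MatrixCoeff H} {b : ∀ i, H i →L[ℂ] H i} :
    BJOrth p.operator b ↔ p.functional b = 0 := by
  refine ⟨fun h ↦ h.apply_eq_zero_of_norm_add_sq_le p.functional_operator_self_ne_zero
    fun _ ↦ norm_operator_add_sq_le, bjOrth_of_functional_eq_zero ?_⟩
  rw [functional_operator_self, Complex.norm_real, norm_operator, ← sq]
  exact le_abs_self _

lemma exists_functional_bjOrth [∀ i, FiniteDimensional ℂ (H i)] {a : ∀ i, H i →L[ℂ] H i}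
    (ha : a ≠ 0) : ∃ p : MatrixCoeff H, ∀ b, p.functional b = 0 → BJOrth a b := by
  obtain ⟨i₀, -⟩ := Function.ne_iff.1 ha
  have : Nonempty ι := ⟨i₀⟩
  obtain ⟨i, hi⟩ := Finite.exists_max fun i ↦ ‖a i‖
  have hnorm : ‖a i‖ = ‖a‖ :=
    (norm_le_pi_norm a i).antisymm ((pi_norm_le_iff_of_nonneg (norm_nonneg _)).2 hi)
  have hai : a i ≠ 0 := by rwa [← norm_ne_zero_iff, hnorm, norm_ne_zero_iff]
  have : Nontrivial (H i) := by
    obtain ⟨x, hx⟩ := DFunLike.ne_iff.1 hai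
    exact ⟨x, 0, fun h ↦ hx (by simp [h])⟩
  obtain ⟨ξ, hξ, hmax⟩ := exists_norm_eq_one_norm_apply_eq_opNorm (a i)
  have hξ0 : ξ ≠ 0 := norm_ne_zero_iff.1 (by simp [hξ])
  have haξ : a i ξ ≠ 0 := by rwa [← norm_ne_zero_iff, hmax, norm_ne_zero_iff]
  refine ⟨⟨i, ξ, a i ξ, hξ0, haξ⟩, fun b ↦ bjOrth_of_functional_eq_zero ?_⟩
  simp [functional_apply, hξ, hmax, hnorm, inner_self_eq_norm_sq_to_K, sq]

-- The kernels of the functionals are exactly the maximal sets `{y | BJOrth a y}`, `a ≠ 0`.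
lemma exists_functional_eq_zero_iff [Fintype κ] [∀ i, FiniteDimensional ℂ (H i)]
    [∀ j, FiniteDimensional ℂ (K j)] (ψ : BJIso (∀ i, H i →L[ℂ] H i) (∀ j, K j →L[ℂ] K j))
    (p : MatrixCoeff H) :
    ∃ q : MatrixCoeff K, ∀ y, p.functional y = 0 ↔ q.functional (ψ y) = 0 := by
  classical
  obtain ⟨q, hq⟩ := exists_functional_bjOrth (ψ.map_eq_zero_iff.not.2 p.operator_ne_zero)
  obtain ⟨p', hp'⟩ :=
    exists_functional_bjOrth (BJIso.map_eq_zero_iff ψ.symm |>.not.2 q.operator_ne_zero)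
  have hqp (y) (hy : q.functional (ψ y) = 0) : p.functional y = 0 :=
    bjOrth_operator_iff.1 (ψ.map_rel_iff.1 (hq _ hy))
  have hp'q (y) (hy : p'.functional y = 0) : q.functional (ψ y) = 0 := by
    simpa [bjOrth_operator_iff] using ψ.map_rel_iff.2 (hp' y hy)
  exact ⟨q, fun y ↦ ⟨fun hy ↦ hp'q y <| dual_apply_eq_zero_of_imp p.functional_ne_zero
    (fun z hz ↦ hqp z (hp'q z hz)) hy, hqp y⟩⟩

end Orthogonality

section Blocks

lemma block_eq_of_imp {p q : MatrixCoeff H} (h : ∀ y, q.functional y = 0 → p.functional y = 0) :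
    p.block = q.block := by
  classical
  by_contra hne
  exact p.functional_operator_self_ne_zero (h _ (functional_operator_of_ne (Ne.symm hne)))

/-- Two matrix coefficients are linked if, modulo a third one, each is a multiple of the other.
Linear relations between coefficients are visible to Birkhoff–James orthogonality, so linking is
too, and it forces the two coefficients to live in the same block. -/
def Linked (p q : MatrixCoeff H) : Prop :=
  ∃ r : MatrixCoeff H, p.functional ∈ span ℂ (functional '' {q, r}) ∧
    q.functional ∈ span ℂ (functional '' {p, r})

lemma linked_of_functional_add_eq_zero {p q : MatrixCoeff H}
    (h : p.functional + q.functional = 0) : Linked p q := by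
  refine ⟨p, subset_span (by simp), ?_⟩
  rw [eq_neg_of_add_eq_zero_right h]
  exact neg_mem (subset_span (by simp))

lemma linked_of_functional_eq_add {p q r : MatrixCoeff H}
    (h : r.functional = p.functional + q.functional) : Linked p q := by
  refine ⟨r, ?_, ?_⟩
  · rw [eq_sub_of_add_eq h.symm]
    exact sub_mem (subset_span (by simp)) (subset_span (by simp))
  · rw [eq_sub_of_add_eq' h.symm]
    exact sub_mem (subset_span (by simp)) (subset_span (by simp))

lemma linked_of_source_eq {i : ι} {ξ η η' : H i} (hξ : ξ ≠ 0) (hη : η ≠ 0) (hη' : η' ≠ 0) :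
    Linked (⟨i, ξ, η, hξ, hη⟩ : MatrixCoeff H) ⟨i, ξ, η', hξ, hη'⟩ := by
  by_cases h : η + η' = 0
  · refine linked_of_functional_add_eq_zero (LinearMap.ext fun b ↦ ?_)
    simp [functional_apply, ← inner_add_left, h]
  · refine linked_of_functional_eq_add (r := ⟨i, ξ, η + η', hξ, h⟩) (LinearMap.ext fun b ↦ ?_)
    simp [functional_apply]

lemma linked_of_target_eq {i : ι} {ξ ξ' η : H i} (hξ : ξ ≠ 0) (hξ' : ξ' ≠ 0) (hη : η ≠ 0) :
    Linked (⟨i, ξ, η, hξ, hη⟩ : MatrixCoeff H) ⟨i, ξ', η, hξ', hη⟩ := by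
  by_cases h : ξ + ξ' = 0
  · refine linked_of_functional_add_eq_zero (LinearMap.ext fun b ↦ ?_)
    simp [functional_apply, ← inner_add_right, ← map_add, h]
  · refine linked_of_functional_eq_add (r := ⟨i, ξ + ξ', η, h, hη⟩) (LinearMap.ext fun b ↦ ?_)
    simp [functional_apply]

lemma exists_block_eq_of_mem_span {p : MatrixCoeff H} {s : Set (MatrixCoeff H)}
    (h : p.functional ∈ span ℂ (functional '' s)) : ∃ q ∈ s, q.block = p.block := by
  classical
  by_contra! hs
  exact p.functional_operator_self_ne_zero
    (dual_apply_eq_zero_of_mem_span_image h fun q hq ↦ functional_operator_of_ne (hs q hq))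

lemma Linked.block_eq {p q : MatrixCoeff H} (h : Linked p q) : p.block = q.block := by
  obtain ⟨r, hp, hq⟩ := h
  obtain ⟨s, rfl | rfl, hs⟩ := exists_block_eq_of_mem_span hp
  · exact hs.symm
  · obtain ⟨t, rfl | rfl, ht⟩ := exists_block_eq_of_mem_span hq
    exacts [ht, hs.symm.trans ht]

variable [Finite ι] [Finite κ] [∀ i, FiniteDimensional ℂ (H i)] [∀ j, FiniteDimensional ℂ (K j)]

lemma finrank_span_functional (i : ι) :
    finrank ℂ (span ℂ (Set.range fun p : {p : MatrixCoeff H // p.block = i} ↦ p.1.functional)) =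
      finrank ℂ (H i) ^ 2 := by
  set S := span ℂ (Set.range fun p : {p : MatrixCoeff H // p.block = i} ↦ p.1.functional)
  let blockProj : (∀ i, H i →L[ℂ] H i) →ₗ[ℂ] (H i →L[ℂ] H i) := LinearMap.proj i
  have hker : S.dualCoannihilator = LinearMap.ker blockProj := by
    apply SetLike.coe_injective
    ext b
    simp only [S, coe_dualCoannihilator_span, Set.forall_mem_range, Set.mem_ofPred_eq,
      SetLike.mem_coe, LinearMap.mem_ker]
    refine ⟨fun hb ↦ ContinuousLinearMap.ext fun x ↦ by_contra fun hx ↦ hx ?_, ?_⟩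
    · have hx0 : x ≠ 0 := by rintro rfl; exact hx (map_zero _)
      exact inner_self_eq_zero.1 (hb ⟨⟨i, x, b i x, hx0, hx⟩, rfl⟩)
    · rintro hb ⟨p, rfl⟩
      have hb' : b p.block = 0 := hb
      simp [functional_apply, hb']
  have hrange : LinearMap.range blockProj = ⊤ :=
    LinearMap.range_eq_top.2 (LinearMap.proj_surjective i)
  have hdim : finrank ℂ (H i →L[ℂ] H i) = finrank ℂ (H i) ^ 2 := by
    rw [← (LinearMap.toContinuousLinearMap (𝕜 := ℂ) (E := H i) (F' := H i)).finrank_eq,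
      finrank_linearMap, sq]
  have hsum := Subspace.finrank_add_finrank_dualCoannihilator_eq S
  have hrk := blockProj.finrank_range_add_finrank_ker
  rw [hrange, finrank_top, hdim] at hrk
  rw [hker] at hsum
  omega

section Correspondence

variable {ψ : (∀ i, H i →L[ℂ] H i) → ∀ j, K j →L[ℂ] K j} {σ : MatrixCoeff H → MatrixCoeff K}

lemma Linked.map (hψ : Function.Surjective ψ)
    (hσ : ∀ p y, p.functional y = 0 ↔ (σ p).functional (ψ y) = 0) {p q : MatrixCoeff H}
    (h : Linked p q) : Linked (σ p) (σ q) := by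
  have hmap := mem_span_dual_image_congr (w := functional ∘ σ) hψ hσ
  obtain ⟨r, hp, hq⟩ := h
  rw [hmap, Set.image_comp, Set.image_pair] at hp hq
  exact ⟨σ r, hp, hq⟩

lemma block_map_eq (hψ : Function.Surjective ψ)
    (hσ : ∀ p y, p.functional y = 0 ↔ (σ p).functional (ψ y) = 0) {p q : MatrixCoeff H}
    (h : p.block = q.block) : (σ p).block = (σ q).block := by
  obtain ⟨i, ξ, η, hξ, hη⟩ := p
  obtain ⟨_, ξ', η', hξ', hη'⟩ := q
  obtain rfl : i = _ := h
  exact ((linked_of_source_eq hξ hη hη').map hψ hσ).block_eq.trans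
    ((linked_of_target_eq hξ hξ' hη').map hψ hσ).block_eq

lemma finrank_le_of_block_map_eq (hψ : Function.Surjective ψ)
    (hσ : ∀ p y, p.functional y = 0 ↔ (σ p).functional (ψ y) = 0) {i : ι} {j : κ}
    (hij : ∀ p, p.block = i → (σ p).block = j) : finrank ℂ (H i) ≤ finrank ℂ (K j) := by
  rw [← pow_le_pow_iff_left₀ (Nat.zero_le _) (Nat.zero_le _) two_ne_zero,
    ← finrank_span_functional, ← finrank_span_functional]
  have hmem := mem_span_dual_image_congr hψ fun p : {p : MatrixCoeff H // p.block = i} ↦ hσ p.1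
  refine (finrank_span_range_le fun p s ↦ (hmem p s).2).trans (finrank_mono (span_mono ?_))
  rintro _ ⟨⟨p, hp⟩, rfl⟩
  exact ⟨⟨σ p, hij p hp⟩, rfl⟩

end Correspondence

end Blocks

end MatrixCoeff

lemma exists_equiv_apply_eq {α ι κ : Type*} {f : α → ι} {g : α → κ} (hf : Function.Surjective f)
    (hg : Function.Surjective g) (h : ∀ a b, f a = f b ↔ g a = g b) :
    ∃ e : ι ≃ κ, ∀ a, e (f a) = g a := by
  have hinv (a : α) : g (Function.surjInv hf (f a)) = g a :=
    (h _ _).1 (Function.surjInv_eq hf (f a))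
  refine ⟨.ofBijective (g ∘ Function.surjInv hf) ⟨hf.forall₂.2 fun a b hab ↦ ?_, fun k ↦ ?_⟩, hinv⟩
  · simpa only [Function.comp_apply, hinv, ← h] using hab
  · obtain ⟨a, rfl⟩ := hg k
    exact ⟨f a, hinv a⟩

section BlockAlgebras

open Module

variable {ι κ : Type*} {H : ι → Type*} {K : κ → Type*} [∀ i, NormedAddCommGroup (H i)]
  [∀ i, InnerProductSpace ℂ (H i)] [∀ i, FiniteDimensional ℂ (H i)]
  [∀ j, NormedAddCommGroup (K j)] [∀ j, InnerProductSpace ℂ (K j)]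
  [∀ j, FiniteDimensional ℂ (K j)]

theorem nonempty_starAlgEquiv_pi_of_finrank_eq (e : ι ≃ κ)
    (h : ∀ i, finrank ℂ (H i) = finrank ℂ (K (e i))) :
    Nonempty ((∀ i, H i →L[ℂ] H i) ≃⋆ₐ[ℂ] ∀ j, K j →L[ℂ] K j) := by
  let isometry (i : ι) : H i ≃ₗᵢ[ℂ] K (e i) :=
    (stdOrthonormalBasis ℂ (H i)).equiv (stdOrthonormalBasis ℂ (K (e i))) (finCongr (h i))
  let algEquiv : (∀ i, H i →L[ℂ] H i) ≃ₐ[ℂ] ∀ j, K j →L[ℂ] K j :=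
    (AlgEquiv.piCongrRight fun i ↦ (isometry i).conjStarAlgEquiv.toAlgEquiv).trans
      (AlgEquiv.piCongrLeft ℂ (fun j ↦ K j →L[ℂ] K j) e)
  have happly (a : ∀ i, H i →L[ℂ] H i) (i : ι) :
      algEquiv a (e i) = (isometry i).conjStarAlgEquiv (a i) :=
    Equiv.piCongrLeft_apply_apply (fun j ↦ K j →L[ℂ] K j) e
      (fun i ↦ (isometry i).conjStarAlgEquiv (a i)) i
  refine ⟨.ofAlgEquiv algEquiv fun a ↦ funext (e.surjective.forall.2 fun i ↦ ?_)⟩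
  rw [Pi.star_apply, happly, happly, Pi.star_apply]
  exact map_star (isometry i).conjStarAlgEquiv (a i)

variable [Fintype ι] [Fintype κ] [∀ i, Nontrivial (H i)] [∀ j, Nontrivial (K j)]

open MatrixCoeff in
theorem BJIso.exists_equiv_finrank_eq
    (ψ : BJIso (∀ i, H i →L[ℂ] H i) (∀ j, K j →L[ℂ] K j)) :
    ∃ e : ι ≃ κ, ∀ i, finrank ℂ (H i) = finrank ℂ (K (e i)) := by
  choose σ hσ using exists_functional_eq_zero_iff ψ
  choose τ hτ using exists_functional_eq_zero_iff ψ.symm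
  have hτσ (p) : (τ (σ p)).block = p.block := block_eq_of_imp fun y hy ↦ by
    simpa using (hτ _ _).1 ((hσ p y).1 hy)
  have hστ (q) : (σ (τ q)).block = q.block := block_eq_of_imp fun y hy ↦ by
    simpa using (hσ _ _).1 ((hτ q y).1 hy)
  have hblock (p q) : p.block = q.block ↔ (σ p).block = (σ q).block :=
    ⟨block_map_eq ψ.surjective hσ, fun h ↦ by
      simpa only [hτσ] using block_map_eq ψ.symm.surjective hτ h⟩
  obtain ⟨e, he⟩ := exists_equiv_apply_eq (g := block ∘ σ) block_surjective
    (block_surjective.forall.2 fun q ↦ ⟨τ q, hστ q⟩) hblock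
  refine ⟨e, fun i ↦ le_antisymm ?_ ?_⟩
  · exact finrank_le_of_block_map_eq ψ.surjective hσ fun p hp ↦ by rw [← hp, he]; rfl
  · refine finrank_le_of_block_map_eq ψ.symm.surjective hτ fun q hq ↦ e.injective ?_
    rw [he, Function.comp_apply, hστ, hq]

theorem BJIso.nonempty_starAlgEquiv_pi
    (ψ : BJIso (∀ i, H i →L[ℂ] H i) (∀ j, K j →L[ℂ] K j)) :
    Nonempty ((∀ i, H i →L[ℂ] H i) ≃⋆ₐ[ℂ] ∀ j, K j →L[ℂ] K j) :=
  let ⟨e, he⟩ := ψ.exists_equiv_finrank_eq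
  nonempty_starAlgEquiv_pi_of_finrank_eq e he

end BlockAlgebras

/-- If two complex C*-algebras are BJ-isomorphic (there is a bijection preserving
Birkhoff–James orthogonality in both directions) and the first is finite-dimensional of
complex dimension at least 2, then they are isomorphic as star-algebras over ℂ. -/
theorem cstarAlgebra_bj_classification
    {A₁ A₂ : Type*} [NonUnitalCStarAlgebra A₁] [NonUnitalCStarAlgebra A₂]
    [FiniteDimensional ℂ A₁] (hdim : 2 ≤ Module.finrank ℂ A₁)
    (φ : A₁ → A₂) (hbij : Function.Bijective φ)
    (hφ : ∀ u v : A₁, BJOrth u v ↔ BJOrth (φ u) (φ v)) :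
    Nonempty (A₁ ≃⋆ₐ[ℂ] A₂) := by
  let ψ : BJIso A₁ A₂ := ⟨Equiv.ofBijective φ hbij, (hφ _ _).symm⟩
  have : FiniteDimensional ℂ A₂ := ψ.finiteDimensional
  obtain ⟨k₁, d₁, hd₁, ⟨Φ₁⟩⟩ := exists_starAlgEquiv_pi_operators A₁
  obtain ⟨k₂, d₂, hd₂, ⟨Φ₂⟩⟩ := exists_starAlgEquiv_pi_operators A₂
  obtain ⟨Θ⟩ := BJIso.nonempty_starAlgEquiv_pi
    ((BJIso.ofStarAlgEquiv Φ₁).symm.trans (ψ.trans (BJIso.ofStarAlgEquiv Φ₂)))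
  exact ⟨Φ₁.trans (Θ.trans Φ₂.symm)⟩
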